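/- arXiv:1911.09890 — 2 statements merged into one kernel-verified Lean document; each statement's English description precedes it below -/
import Mathlib

section
/- Let S be a finite set and 𝓛 a laminar family of subsets of S whose characteristic vectors {χ_Z : Z ∈ 𝓛} are linearly independent over ℝ. Let x ∈ ℝ^S with 0 < x(s) < 1 for every s ∈ S, and suppose x(Z) ∈ ℤ for every Z ∈ 𝓛. Then for every U ∈ 𝓛, the set U − ⋃_{W ∈ 𝓛^max(U)} W is nonempty and contains at least 2 elements, where 𝓛^max(U) denotes the maximal members of 𝓛 properly contained in U. -/
/-- The characteristic vector `χ_Z ∈ ℝ^S` of a finite set `Z ⊆ S`. -/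
def chiVec {S : Type*} [DecidableEq S] (Z : Finset S) : S → ℝ :=
  fun s => if s ∈ Z then 1 else 0

/-- The maximal members of `L` properly contained in `U`:
`𝓛^max(U) = { Y ∈ 𝓛 : Y ⊊ U, ¬∃ Y' ∈ 𝓛, Y ⊊ Y' ⊊ U }`. -/
def maxMembers {S : Type*} [DecidableEq S] (L : Finset (Finset S)) (U : Finset S) :
    Finset (Finset S) :=
  L.filter (fun Y => Y ⊂ U ∧ ∀ Y' ∈ L, Y ⊂ Y' → ¬ Y' ⊂ U)

/-!
The maximal members of `L` below `U` are pairwise disjoint, so together with the remainder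
`R = U \ ⋃ 𝓛^max(U)` they partition `U`. If `R` were empty, `χ_U` would be the sum of the `χ_W`
with `W ∈ 𝓛^max(U)`, against linear independence. Moreover `x(R) = x(U) - ∑ x(W)` is an integer
while no single `x(s)` is, so `R` is not a singleton. The same argument applies with
`ℤ ⊆ ℝ` replaced by any subgroup of an abelian group that contains no value of `x`.
-/

/-- A family of elements of a partial order with `⊥` is laminar if any two members are comparable
or disjoint. For families of sets this is the usual notion, stated with nonstrict inclusions. -/
def IsLaminar {α : Type*} [PartialOrder α] [OrderBot α] (F : Set α) : Prop :=
  ∀ X ∈ F, ∀ Y ∈ F, X ≤ Y ∨ Y ≤ X ∨ Disjoint X Y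

namespace IsLaminar

variable {α : Type*} [PartialOrder α] [OrderBot α] {F G : Set α}

theorem mono (hFG : F ⊆ G) (hG : IsLaminar G) : IsLaminar F :=
  fun X hX Y hY => hG X (hFG hX) Y (hFG hY)

theorem pairwiseDisjoint_of_isAntichain (hF : IsLaminar F) (hanti : IsAntichain (· ≤ ·) F) :
    F.PairwiseDisjoint id := by
  intro X hX Y hY hXY
  rcases hF X hX Y hY with hle | hge | hdisj
  · exact absurd hle (hanti hX hY hXY)
  · exact absurd hge (hanti hY hX hXY.symm)
  · exact hdisj

end IsLaminar

theorem sum_sdiff_sup_add_sum_sum {S M : Type*} [DecidableEq S] [AddCommMonoid M]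
    {P : Finset (Finset S)} {U : Finset S} (hdisj : (P : Set (Finset S)).PairwiseDisjoint id)
    (hPU : P.sup id ⊆ U) (f : S → M) :
    ∑ s ∈ U \ P.sup id, f s + ∑ W ∈ P, ∑ s ∈ W, f s = ∑ s ∈ U, f s := by
  have hsup : ∑ s ∈ P.sup id, f s = ∑ W ∈ P, ∑ s ∈ W, f s := by
    rw [Finset.sup_eq_biUnion]
    exact Finset.sum_biUnion hdisj
  rw [← hsup, Finset.sum_sdiff hPU]

section MaxMembers

variable {S : Type*} [DecidableEq S] {L : Finset (Finset S)} {U W : Finset S}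

theorem mem_maxMembers_iff_maximal :
    W ∈ maxMembers L U ↔ Maximal (fun Y => Y ∈ L ∧ Y ⊂ U) W := by
  simp only [maxMembers, Finset.mem_filter, maximal_iff_forall_gt, not_and, and_assoc]
  tauto

theorem maxMembers_subset : maxMembers L U ⊆ L :=
  Finset.filter_subset _ _

theorem ssubset_of_mem_maxMembers (hW : W ∈ maxMembers L U) : W ⊂ U :=
  (mem_maxMembers_iff_maximal.1 hW).prop.2

theorem notMem_maxMembers_self : U ∉ maxMembers L U :=
  fun hU => (ssubset_of_mem_maxMembers hU).ne rfl

theorem sup_maxMembers_subset : (maxMembers L U).sup id ⊆ U :=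
  Finset.sup_le fun _ hW => (ssubset_of_mem_maxMembers hW).subset

theorem isAntichain_maxMembers : IsAntichain (· ≤ ·) (maxMembers L U : Set (Finset S)) :=
  (setOfPred_maximal_antichain _).subset fun _ hW => mem_maxMembers_iff_maximal.1 hW

theorem IsLaminar.pairwiseDisjoint_maxMembers (hL : IsLaminar (L : Set (Finset S))) :
    (maxMembers L U : Set (Finset S)).PairwiseDisjoint id :=
  (hL.mono (Finset.coe_subset.2 maxMembers_subset)).pairwiseDisjoint_of_isAntichain
    isAntichain_maxMembers

theorem IsLaminar.sum_sdiff_sup_maxMembers_add {M : Type*} [AddCommMonoid M]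
    (hL : IsLaminar (L : Set (Finset S))) (f : S → M) :
    ∑ s ∈ U \ (maxMembers L U).sup id, f s + ∑ W ∈ maxMembers L U, ∑ s ∈ W, f s =
      ∑ s ∈ U, f s :=
  sum_sdiff_sup_add_sum_sum hL.pairwiseDisjoint_maxMembers sup_maxMembers_subset f

end MaxMembers

section Remainder

variable {S : Type*} [DecidableEq S] {L : Finset (Finset S)} {U : Finset S}

theorem chiVec_eq_sum_single (Z : Finset S) : chiVec Z = ∑ s ∈ Z, Pi.single s 1 := by
  ext t
  simp [chiVec, Finset.sum_apply, Pi.single_apply]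

theorem chiVec_ne_sum_chiVec (hind : LinearIndependent ℝ (fun Z : L => chiVec (Z : Finset S)))
    (hU : U ∈ L) {P : Finset (Finset S)} (hPL : P ⊆ L) (hUP : U ∉ P) :
    chiVec U ≠ ∑ W ∈ P, chiVec W := by
  intro hsum
  have hspan : chiVec U ∉ Submodule.span ℝ
      ((fun Z : L => chiVec (Z : Finset S)) '' {Z | (Z : Finset S) ∈ P}) :=
    hind.notMem_span_image (x := ⟨U, hU⟩) hUP
  refine hspan (hsum ▸ Submodule.sum_mem _ fun W hW => Submodule.subset_span ?_)
  exact ⟨⟨W, hPL hW⟩, hW, rfl⟩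

theorem IsLaminar.sdiff_sup_maxMembers_nonempty (hL : IsLaminar (L : Set (Finset S)))
    (hind : LinearIndependent ℝ (fun Z : L => chiVec (Z : Finset S))) (hU : U ∈ L) :
    (U \ (maxMembers L U).sup id).Nonempty := by
  by_contra hempty
  refine chiVec_ne_sum_chiVec hind hU maxMembers_subset notMem_maxMembers_self ?_
  have hdecomp := hL.sum_sdiff_sup_maxMembers_add (U := U) (fun s => Pi.single s (1 : ℝ))
  rw [Finset.not_nonempty_iff_eq_empty.1 hempty, Finset.sum_empty, zero_add] at hdecomp
  simpa only [chiVec_eq_sum_single] using hdecomp.symm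

theorem IsLaminar.sum_sdiff_sup_maxMembers_mem {G : Type*} [AddCommGroup G]
    (hL : IsLaminar (L : Set (Finset S))) {A : AddSubgroup G} {x : S → G}
    (hsum : ∀ Z ∈ L, ∑ s ∈ Z, x s ∈ A) (hU : U ∈ L) :
    ∑ s ∈ U \ (maxMembers L U).sup id, x s ∈ A := by
  rw [eq_sub_of_add_eq (hL.sum_sdiff_sup_maxMembers_add x)]
  exact A.sub_mem (hsum U hU) (A.sum_mem fun W hW => hsum W (maxMembers_subset hW))

end Remainder

theorem two_le_card_of_sum_mem {ι M : Type*} [AddCommMonoid M] {A : Set M} {f : ι → M}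
    {s : Finset ι} (hs : s.Nonempty) (hf : ∀ i ∈ s, f i ∉ A) (hsum : ∑ i ∈ s, f i ∈ A) :
    2 ≤ s.card := by
  rcases hs.exists_eq_singleton_or_nontrivial with ⟨i, rfl⟩ | hnontrivial
  · rw [Finset.sum_singleton] at hsum
    exact absurd hsum (hf i (Finset.mem_singleton_self i))
  · exact Finset.one_lt_card_iff_nontrivial.2 hnontrivial

theorem notMem_range_intCastAddHom_of_pos_of_lt_one {R : Type*} [Ring R] [PartialOrder R]
    [IsStrictOrderedRing R] {r : R} (hpos : 0 < r) (hlt : r < 1) :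
    r ∉ (Int.castAddHom R).range := by
  rintro ⟨k, rfl⟩
  have hkpos : 0 < k := Int.cast_pos.1 hpos
  have hklt : k < 1 := Int.cast_lt.1 (hlt.trans_eq Int.cast_one.symm)
  omega

theorem laminar_counting_step_general {S G : Type*} [DecidableEq S] [AddCommGroup G]
    {L : Finset (Finset S)} (hL : IsLaminar (L : Set (Finset S)))
    (hind : LinearIndependent ℝ (fun Z : L => chiVec (Z : Finset S)))
    {A : AddSubgroup G} {x : S → G} {U : Finset S} (hx : ∀ s ∈ U, x s ∉ A)
    (hsum : ∀ Z ∈ L, ∑ s ∈ Z, x s ∈ A) (hU : U ∈ L) :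
    (U \ (maxMembers L U).sup id).Nonempty ∧ 2 ≤ (U \ (maxMembers L U).sup id).card := by
  have hne := hL.sdiff_sup_maxMembers_nonempty hind hU
  have hxR : ∀ s ∈ U \ (maxMembers L U).sup id, x s ∉ (A : Set G) :=
    fun s hs => hx s (Finset.sdiff_subset hs)
  exact ⟨hne, two_le_card_of_sum_mem hne hxR (hL.sum_sdiff_sup_maxMembers_mem hsum hU)⟩

/-- Key counting step in the token-redistribution argument of Theorem 1: if `𝓛` is a
laminar family with linearly independent characteristic vectors, `0 < x(s) < 1` for every
`s ∈ S`, and `x(Z)` is an integer for every `Z ∈ 𝓛`, then for every `U ∈ 𝓛` the set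
`U \ ⋃_{W ∈ 𝓛^max(U)} W` is nonempty and has at least two elements. -/
theorem laminar_counting_step
    {S : Type*} [Fintype S] [DecidableEq S]
    (L : Finset (Finset S))
    (hlam : ∀ X ∈ L, ∀ Y ∈ L, X ⊆ Y ∨ Y ⊆ X ∨ Disjoint X Y)
    (hind : LinearIndependent ℝ (fun Z : L => chiVec (Z : Finset S)))
    (x : S → ℝ)
    (hx0 : ∀ s : S, 0 < x s) (hx1 : ∀ s : S, x s < 1)
    (hint : ∀ Z ∈ L, ∃ k : ℤ, ∑ s ∈ Z, x s = (k : ℝ))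
    (U : Finset S) (hU : U ∈ L) :
    (U \ (maxMembers L U).sup id).Nonempty ∧ 2 ≤ (U \ (maxMembers L U).sup id).card :=
  laminar_counting_step_general hlam hind
    (fun s _ => notMem_range_intCastAddHom_of_pos_of_lt_one (hx0 s) (hx1 s))
    (fun Z hZ => (hint Z hZ).imp fun _ hk => hk.symm) hU
end

section
/- Let G = (V,E) be a finite complete undirected graph whose edge set contains a self-loop at every vertex, let r : V → ℤ≥1, set r̂ = r(V) − |V| + 1, and define b : 2^E → ℤ by b(F) = |V(F)| − comp(F) + r̂ for F ≠ ∅ and b(∅) = 0. Let B = { x ∈ ℤ^E_{≥0} : x(E) = r(V) and the support supp(x) = {e : x(e) ≠ 0} is a connected subgraph of G (spanning all of V) }, and let B(b) = { x ∈ ℝ^E : x(Y) ≤ b(Y) for every Y ⊆ E, x(E) = b(E) } be the base polymatroid of b. Then B = B(b) ∩ ℤ^E_{≥0}: the nonnegative integral vectors with total value r(V) and connected support are exactly the integral elements of B(b). -/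
/- The complete undirected graph with a self-loop at every vertex of the finite vertex
type `V` is modelled by taking the edge set `E` to be all of `Sym2 V`. -/

/-- `V(F)`: the set of vertices covered by the edge set `F`. -/
def coveredVerts {V : Type*} [Fintype V] [DecidableEq V] (F : Finset (Sym2 V)) : Set V :=
  {v | ∃ e ∈ F, v ∈ e}

/-- `comp(F)`: the number of connected components of the graph `(V(F), F)`. -/
noncomputable def numComp {V : Type*} [Fintype V] [DecidableEq V]
    (F : Finset (Sym2 V)) : ℕ :=
  ((SimpleGraph.fromEdgeSet (↑F : Set (Sym2 V))).connectedComponentMk '' coveredVerts F).ncard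

/-- The border function `b(F) = |V(F)| - comp(F) + r̂` for `F ≠ ∅`, and `b(∅) = 0`. -/
noncomputable def borderB {V : Type*} [Fintype V] [DecidableEq V]
    (rhat : ℤ) (F : Finset (Sym2 V)) : ℤ :=
  if F = ∅ then 0 else ((coveredVerts F).ncard : ℤ) - (numComp F : ℤ) + rhat

/-- `supp(x)` is a connected subgraph of `G` spanning all of `V`: every cut of `V` is
crossed by some edge of the support of `x`. -/
def ConnSupp {V : Type*} [Fintype V] [DecidableEq V] (x : Sym2 V → ℤ) : Prop :=
  ∀ A : Finset V, A.Nonempty → A ≠ Finset.univ → ∃ u ∈ A, ∃ w, w ∉ A ∧ x s(u, w) ≠ 0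

/-!
Let `c(F)` be the number of components of the spanning graph `(V, F)`. Uncovered vertices are
singleton components, so `|V(F)| - comp(F) = |V| - c(F)`, and once `x(E) = r(V)` the inequality
`x(F) ≤ b(F)` with `F ≠ ∅` becomes `c(F) ≤ x(E \ F) + 1`. If the support is connected, its edges
outside `F` still connect the `c(F)` vertices obtained by contracting the components of `(V, F)`;
there are therefore at least `c(F) - 1` of them, each of weight at least `1`. Conversely, taking for
`F` the support itself gives `x(E \ F) = 0`, hence `c(F) ≤ 1`.
-/

section Graph

open SimpleGraph

variable {V : Type*} {G : SimpleGraph V}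

theorem preconnected_iff_forall_exists_adj_cut :
    G.Preconnected ↔
      ∀ A : Set V, A.Nonempty → A ≠ Set.univ → ∃ u ∈ A, ∃ w ∉ A, G.Adj u w := by
  constructor
  · rintro hG A ⟨a, ha⟩ hA
    obtain ⟨b, hb⟩ := (Set.ne_univ_iff_exists_notMem A).mp hA
    obtain ⟨p⟩ := hG a b
    obtain ⟨d, -, hfst, hsnd⟩ := p.exists_boundary_dart A ha hb
    exact ⟨d.fst, hfst, d.snd, hsnd, d.adj⟩
  · intro hcut u v
    by_contra huv
    obtain ⟨a, ha, b, hb, hab⟩ := hcut {w | G.Reachable u w} ⟨u, .refl u⟩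
      ((Set.ne_univ_iff_exists_notMem _).mpr ⟨v, huv⟩)
    exact hb (Reachable.trans ha hab.reachable)

theorem card_connectedComponent_eq_ncard_image_add_ncard_compl [Finite V] {s : Set V}
    (hs : G.support ⊆ s) :
    Nat.card G.ConnectedComponent = (G.connectedComponentMk '' s).ncard + sᶜ.ncard := by
  have eq_of_reachable {u v : V} (hu : u ∈ sᶜ) (huv : G.Reachable u v) : u = v := by
    by_contra hne
    exact hu (hs (mem_support_of_reachable hne huv))
  have hinj : Set.InjOn G.connectedComponentMk sᶜ := fun u hu v _ huv ↦
    eq_of_reachable hu (ConnectedComponent.exact huv)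
  have hdisj : Disjoint (G.connectedComponentMk '' s) (G.connectedComponentMk '' sᶜ) := by
    rw [Set.disjoint_left]
    rintro _ ⟨u, hu, rfl⟩ ⟨v, hv, hvu⟩
    exact hv (eq_of_reachable hv (ConnectedComponent.exact hvu) ▸ hu)
  have hsurj : Function.Surjective G.connectedComponentMk := Quot.mk_surjective
  rw [← hinj.ncard_image, ← Set.ncard_union_eq hdisj, ← Set.image_union,
    Set.union_compl_self, Set.image_univ_of_surjective hsurj, Set.ncard_univ]

/-- The graph obtained from `(V, T)` by contracting each connected component of `G` to a point;
the loops and parallel edges this creates are discarded. -/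
def contractComponents (G : SimpleGraph V) (T : Set (Sym2 V)) : SimpleGraph G.ConnectedComponent :=
  fromEdgeSet (Sym2.map G.connectedComponentMk '' T)

theorem reachable_contractComponents_of_adj {T : Set (Sym2 V)} {u v : V}
    (huv : (G ⊔ fromEdgeSet T).Adj u v) :
    (contractComponents G T).Reachable (G.connectedComponentMk u) (G.connectedComponentMk v) := by
  rcases huv with hG | hT
  · rw [ConnectedComponent.connectedComponentMk_eq_of_adj hG]
  · rw [contractComponents, reachable_fromEdgeSet_eq_reflTransGen_toRel]
    exact .single ⟨s(u, v), ((fromEdgeSet_adj T).mp hT).1, rfl⟩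

theorem preconnected_contractComponents {T : Set (Sym2 V)}
    (h : (G ⊔ fromEdgeSet T).Preconnected) : (contractComponents G T).Preconnected := by
  refine ConnectedComponent.ind₂ fun u v ↦ ?_
  obtain ⟨p⟩ := h u v
  induction p with
  | nil => rfl
  | cons huw _ ih => exact (reachable_contractComponents_of_adj huw).trans ih

theorem ncard_edgeSet_contractComponents_le {T : Set (Sym2 V)} (hT : T.Finite) :
    (contractComponents G T).edgeSet.ncard ≤ T.ncard := by
  have hsub : (contractComponents G T).edgeSet ⊆ Sym2.map G.connectedComponentMk '' T := by
    rw [contractComponents, edgeSet_fromEdgeSet]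
    exact Set.sdiff_subset
  exact (Set.ncard_le_ncard hsub (hT.image _)).trans (Set.ncard_image_le hT)

theorem card_connectedComponent_le_ncard_add_one {T : Set (Sym2 V)} (hT : T.Finite)
    (h : (G ⊔ fromEdgeSet T).Preconnected) : Nat.card G.ConnectedComponent ≤ T.ncard + 1 := by
  cases isEmpty_or_nonempty G.ConnectedComponent
  · simp
  · have hconn : (contractComponents G T).Connected := ⟨preconnected_contractComponents h⟩
    calc Nat.card G.ConnectedComponent
        ≤ (contractComponents G T).edgeSet.ncard + 1 := hconn.card_vert_le_card_edgeSet_add_one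
      _ ≤ T.ncard + 1 := by grw [ncard_edgeSet_contractComponents_le hT]

end Graph

section Border

open SimpleGraph

variable {V : Type*}

/-- `c(F)`: the number of connected components of the spanning graph `(V, F)`. Unlike in
`numComp`, every vertex not covered by `F` counts as a component. -/
noncomputable def numSpanningComp (F : Finset (Sym2 V)) : ℕ :=
  Nat.card (fromEdgeSet (F : Set (Sym2 V))).ConnectedComponent

theorem numSpanningComp_univ [Fintype V] [Nonempty V] :
    numSpanningComp (Finset.univ : Finset (Sym2 V)) = 1 := by
  have hunique : Subsingleton (⊤ : SimpleGraph V).ConnectedComponent :=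
    connected_top.preconnected.subsingleton_connectedComponent
  rw [numSpanningComp, Finset.coe_univ, fromEdgeSet_univ]
  exact Nat.card_eq_one_iff_unique.mpr ⟨hunique, inferInstance⟩

variable [Fintype V] [DecidableEq V]

theorem support_fromEdgeSet_subset_coveredVerts (F : Finset (Sym2 V)) :
    (fromEdgeSet (F : Set (Sym2 V))).support ⊆ coveredVerts F := by
  rintro u ⟨v, huv⟩
  exact ⟨s(u, v), ((fromEdgeSet_adj _).mp huv).1, Sym2.mem_mk_left u v⟩

theorem numSpanningComp_add_ncard_coveredVerts (F : Finset (Sym2 V)) :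
    numSpanningComp F + (coveredVerts F).ncard = numComp F + Fintype.card V := by
  rw [numSpanningComp, card_connectedComponent_eq_ncard_image_add_ncard_compl
    (support_fromEdgeSet_subset_coveredVerts F), ← numComp, add_assoc,
    add_comm (coveredVerts F)ᶜ.ncard, Set.ncard_add_ncard_compl, Nat.card_eq_fintype_card]

theorem borderB_of_nonempty (rhat : ℤ) {F : Finset (Sym2 V)} (hF : F.Nonempty) :
    borderB rhat F = Fintype.card V - numSpanningComp F + rhat := by
  have hcount := numSpanningComp_add_ncard_coveredVerts F
  rw [borderB, if_neg hF.ne_empty]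
  lia

theorem borderB_univ [Nonempty V] (rhat : ℤ) :
    borderB rhat (Finset.univ : Finset (Sym2 V)) = Fintype.card V - 1 + rhat := by
  obtain ⟨v⟩ := ‹Nonempty V›
  rw [borderB_of_nonempty rhat ⟨s(v, v), Finset.mem_univ _⟩, numSpanningComp_univ, Nat.cast_one]

theorem sum_le_borderB_iff_numSpanningComp_le {rhat : ℤ} {x : Sym2 V → ℤ}
    (htotal : ∑ e, x e = Fintype.card V - 1 + rhat) {F : Finset (Sym2 V)} (hF : F.Nonempty) :
    ∑ e ∈ F, x e ≤ borderB rhat F ↔ numSpanningComp F ≤ ∑ e ∈ Fᶜ, x e + 1 := by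
  have hsplit := Finset.sum_add_sum_compl F x
  rw [borderB_of_nonempty rhat hF]
  lia

end Border

section ConnectedSupport

open SimpleGraph

theorem card_filter_ne_zero_le_sum {ι : Type*} {x : ι → ℤ} {s : Finset ι}
    (hx : ∀ i ∈ s, 0 ≤ x i) :
    ((s.filter fun i ↦ x i ≠ 0).card : ℤ) ≤ ∑ i ∈ s, x i := by
  rw [Finset.card_filter, Nat.cast_sum]
  refine Finset.sum_le_sum fun i hi ↦ ?_
  have := hx i hi
  split_ifs <;> lia

variable {V : Type*} [Fintype V] [DecidableEq V] {x : Sym2 V → ℤ}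

theorem connSupp_iff_preconnected :
    ConnSupp x ↔ (fromEdgeSet (Function.support x)).Preconnected := by
  classical
  rw [preconnected_iff_forall_exists_adj_cut]
  constructor
  · intro h A hA hA'
    obtain ⟨u, hu, w, hw, huw⟩ := h A.toFinset (by simpa using hA) (by simpa using hA')
    rw [Set.mem_toFinset] at hu hw
    exact ⟨u, hu, w, hw, (fromEdgeSet_adj _).mpr ⟨huw, ne_of_mem_of_not_mem hu hw⟩⟩
  · intro h A hA hA'
    obtain ⟨u, hu, w, hw, huw⟩ := h A (by simpa using hA) (by simpa using hA')
    exact ⟨u, hu, w, hw, ((fromEdgeSet_adj _).mp huw).1⟩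

theorem ConnSupp.numSpanningComp_le (h : ConnSupp x) (hx : ∀ e, 0 ≤ x e) (F : Finset (Sym2 V)) :
    numSpanningComp F ≤ ∑ e ∈ Fᶜ, x e + 1 := by
  let T : Finset (Sym2 V) := Fᶜ.filter fun e ↦ x e ≠ 0
  have hcover : Function.support x ⊆ (F : Set (Sym2 V)) ∪ T := fun e he ↦ by
    by_cases heF : e ∈ F <;> simp_all [T]
  have hconn : (fromEdgeSet (F : Set (Sym2 V)) ⊔ fromEdgeSet T).Preconnected := by
    rw [← fromEdgeSet_union]
    exact (connSupp_iff_preconnected.mp h).mono (fromEdgeSet_mono hcover)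
  have hcard := card_connectedComponent_le_ncard_add_one T.finite_toSet hconn
  rw [Set.ncard_coe_finset] at hcard
  calc (numSpanningComp F : ℤ) ≤ T.card + 1 := mod_cast hcard
    _ ≤ ∑ e ∈ Fᶜ, x e + 1 := by grw [card_filter_ne_zero_le_sum fun e _ ↦ hx e]

theorem connSupp_of_forall_numSpanningComp_le
    (h : ∀ F : Finset (Sym2 V), F.Nonempty → numSpanningComp F ≤ ∑ e ∈ Fᶜ, x e + 1) :
    ConnSupp x := by
  rw [connSupp_iff_preconnected]
  intro u v
  -- The loop at `u` makes `F` nonempty without changing the connectivity.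
  let F : Finset (Sym2 V) := insert s(u, u) (Finset.univ.filter fun e ↦ x e ≠ 0)
  have hgraph : fromEdgeSet (F : Set (Sym2 V)) = fromEdgeSet (Function.support x) := by
    ext a b
    simp only [F, fromEdgeSet_adj, Finset.mem_coe, Finset.mem_insert, Finset.mem_filter,
      Finset.mem_univ, true_and, Function.mem_support, Sym2.eq_iff]
    grind
  have hzero : ∑ e ∈ Fᶜ, x e = 0 := Finset.sum_eq_zero fun e he ↦ by simp_all [F]
  have hle_one : numSpanningComp F ≤ 1 := by
    have := h F (Finset.insert_nonempty _ _)
    lia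
  rw [numSpanningComp, hgraph] at hle_one
  have := Finite.card_le_one_iff_subsingleton.mp hle_one
  exact ConnectedComponent.exact (Subsingleton.elim _ _)

end ConnectedSupport

theorem connected_multigraphs_eq_base_polymatroid_general
    {V : Type*} [Fintype V] [DecidableEq V]
    (r : V → ℤ)
    (rhat : ℤ) (hrhat : rhat = (∑ v : V, r v) - (Fintype.card V : ℤ) + 1)
    (x : Sym2 V → ℤ) (hx : ∀ e, 0 ≤ x e) :
    ((∑ e : Sym2 V, x e = ∑ v : V, r v) ∧ ConnSupp x) ↔
    ((∀ Y : Finset (Sym2 V), ∑ e ∈ Y, x e ≤ borderB rhat Y) ∧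
      ∑ e : Sym2 V, x e = borderB rhat (Finset.univ : Finset (Sym2 V))) := by
  cases isEmpty_or_nonempty V
  · simp [borderB, ConnSupp, Finset.eq_empty_of_isEmpty]
  have hborder : borderB rhat (Finset.univ : Finset (Sym2 V)) = ∑ v, r v := by
    rw [borderB_univ, hrhat]
    ring
  rw [hborder, and_comm]
  refine and_congr_left fun hsum ↦ ?_
  have htotal : ∑ e, x e = Fintype.card V - 1 + rhat := by rw [hsum, ← hborder, borderB_univ]
  constructor
  · intro hconn Y
    rcases Y.eq_empty_or_nonempty with rfl | hY
    · simp [borderB]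
    · exact (sum_le_borderB_iff_numSpanningComp_le htotal hY).mpr (hconn.numSpanningComp_le hx Y)
  · intro hle
    exact connSupp_of_forall_numSpanningComp_le fun F hF ↦
      (sum_le_borderB_iff_numSpanningComp_le htotal hF).mp (hle F)

/-- **Lemma 9.** The nonnegative integral vectors `x` on the edges with total value
`x(E) = r(V)` and connected support are exactly the integral elements of the base
polymatroid `B(b)` of the border function `b(F) = |V(F)| - comp(F) + r̂`. -/
theorem connected_multigraphs_eq_base_polymatroid
    {V : Type*} [Fintype V] [DecidableEq V]
    (r : V → ℤ) (hr : ∀ v, 1 ≤ r v)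
    (rhat : ℤ) (hrhat : rhat = (∑ v : V, r v) - (Fintype.card V : ℤ) + 1)
    (x : Sym2 V → ℤ) (hx : ∀ e, 0 ≤ x e) :
    ((∑ e : Sym2 V, x e = ∑ v : V, r v) ∧ ConnSupp x) ↔
    ((∀ Y : Finset (Sym2 V), ∑ e ∈ Y, x e ≤ borderB rhat Y) ∧
      ∑ e : Sym2 V, x e = borderB rhat (Finset.univ : Finset (Sym2 V))) := by
  exact connected_multigraphs_eq_base_polymatroid_general r rhat hrhat x hx
end
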